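/- Set P_n = ∑_{m=n+1}^∞ v_m/|γ_m|², and suppose lim_{n→∞} P_n · (∑_{m=1}^{n} μ(Ω_m)) = 0. Let (a^{(n)}) be a sequence in ℓ²_v with sup_n ‖a^{(n)}‖_v < ∞ and such that a^{(n)}_m → 0 as n → ∞ for each fixed m. Then lim_{n→∞} ∑_{l=1}^∞ μ(Ω_l) (∑_{m=l+1}^∞ |a^{(n)}_m| v_m/|γ_m|)² = 0. -/

import Mathlib

open MeasureTheory Filter Topology
open scoped ENNReal NNReal

noncomputable section

/-! Sequences are indexed by `ℕ`, with the Lean index `n : ℕ` corresponding to the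
paper's index `n + 1` (so `γ 0` is the paper's `γ_1`, `Omega γ 0` is the paper's `Ω_1`,
the paper's partial sum `∑_{m=1}^{n} v_m` is `∑ m ∈ Finset.range (n+1), v m`, and the
paper's tail `∑_{m=n+1}^∞ c_m` is `∑' m : ℕ, c (n+1+m)`). -/

/-- The annular shells `Ω_n` (here `Omega γ 0` is the paper's `Ω_1`). -/
def Omega (γ : ℕ → ℂ) : ℕ → Set ℂ
  | 0 => {z : ℂ | ‖z‖ < (‖γ 0‖ + ‖γ 1‖) / 2}
  | n + 1 => {z : ℂ | (‖γ n‖ + ‖γ (n + 1)‖) / 2 ≤ ‖z‖ ∧ ‖z‖ < (‖γ (n + 1)‖ + ‖γ (n + 2)‖) / 2}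

/-- The sparseness condition `inf_n |γ_{n+1}|/|γ_n| > 1`. -/
def Sparse (γ : ℕ → ℂ) : Prop := ∃ c : ℝ, 1 < c ∧ ∀ n, c * ‖γ n‖ ≤ ‖γ (n + 1)‖

/-- The admissibility condition `∑_n v_n/(1+|γ_n|²) < ∞`. -/
def Admissible (γ : ℕ → ℂ) (v : ℕ → ℝ) : Prop :=
  Summable fun n => v n / (1 + ‖γ n‖ ^ 2)

/-- Membership in `ℓ²_v`. -/
def MemL2v (v : ℕ → ℝ) (a : ℕ → ℂ) : Prop := Summable fun n => ‖a n‖ ^ 2 * v n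

/-- The squared norm `‖a‖²_v = ∑_n |a_n|² v_n`. -/
def normSqV (v : ℕ → ℝ) (a : ℕ → ℂ) : ℝ := ∑' n, ‖a n‖ ^ 2 * v n

/-- The set `(Γ,v)* = {z : ∑_n v_n/|z-γ_n|² < ∞}`. -/
def GammaStar (γ : ℕ → ℂ) (v : ℕ → ℝ) : Set ℂ :=
  {z : ℂ | Summable fun n => v n / ‖z - γ n‖ ^ 2}

/-- The function of `𝓗(Γ,v)` with coefficient sequence `a`:
`f(z) = ∑_n a_n v_n/(z-γ_n)`. -/
def Hfun (γ : ℕ → ℂ) (v : ℕ → ℝ) (a : ℕ → ℂ) (z : ℂ) : ℂ :=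
  ∑' n, a n * (v n : ℂ) / (z - γ n)

/-- `μ` is a Carleson measure for `𝓗(Γ,v)`:
`∫_ℂ |f|² dμ ≤ C ‖a‖²_v` for every `f ∈ 𝓗(Γ,v)` with coefficients `a ∈ ℓ²_v`. -/
def IsCarleson (γ : ℕ → ℂ) (v : ℕ → ℝ) (μ : Measure ℂ) : Prop :=
  ∃ C : ℝ, 0 < C ∧ ∀ a : ℕ → ℂ, MemL2v v a →
    ∫⁻ z, (‖Hfun γ v a z‖₊ : ℝ≥0∞) ^ 2 ∂μ ≤ ENNReal.ofReal (C * normSqV v a)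

/-- The sequence `(a k)` of coefficient sequences converges weakly to zero in `ℓ²_v`:
it is norm bounded and `∑_n a^{(k)}_n v_n conj(b_n) → 0` for every `b ∈ ℓ²_v`. -/
def WeaklyNull (v : ℕ → ℝ) (a : ℕ → ℕ → ℂ) : Prop :=
  (∃ M : ℝ, ∀ k, normSqV v (a k) ≤ M) ∧
    ∀ b : ℕ → ℂ, MemL2v v b →
      Tendsto (fun k => ∑' n, a k n * (v n : ℂ) * (starRingEnd ℂ) (b n)) atTop (𝓝 0)

/-- `μ` is a compact (vanishing) Carleson measure for `𝓗(Γ,v)`: it is Carleson and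
`∫_ℂ |f_k|² dμ → 0` for every weakly null sequence in `𝓗(Γ,v)`. -/
def IsCompactCarleson (γ : ℕ → ℂ) (v : ℕ → ℝ) (μ : Measure ℂ) : Prop :=
  IsCarleson γ v μ ∧
    ∀ a : ℕ → ℕ → ℂ, (∀ k, MemL2v v (a k)) → WeaklyNull v a →
      Tendsto (fun k => ∫⁻ z, (‖Hfun γ v (a k) z‖₊ : ℝ≥0∞) ^ 2 ∂μ) atTop (𝓝 0)

/-- The local quantity `∫_{Ω_n} v_n/|z-γ_n|² dμ(z)`. -/
def localTerm (γ : ℕ → ℂ) (v : ℕ → ℝ) (μ : Measure ℂ) (n : ℕ) : ℝ≥0∞ :=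
  ∫⁻ z in Omega γ n, ENNReal.ofReal (v n / ‖z - γ n‖ ^ 2) ∂μ

/-- The global quantity
`(∑_{m=1}^n v_m)·(∑_{m=n+1}^∞ ∫_{Ω_m} |z|⁻² dμ) + (∑_{m=n+1}^∞ v_m/|γ_m|²)·(∑_{m=1}^n μ(Ω_m))`. -/
def globalTerm (γ : ℕ → ℂ) (v : ℕ → ℝ) (μ : Measure ℂ) (n : ℕ) : ℝ≥0∞ :=
  ENNReal.ofReal (∑ m ∈ Finset.range (n + 1), v m) *
      (∑' m : ℕ, ∫⁻ z in Omega γ (n + 1 + m), ENNReal.ofReal (1 / ‖z‖ ^ 2) ∂μ) +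
    ENNReal.ofReal (∑' m : ℕ, v (n + 1 + m) / ‖γ (n + 1 + m)‖ ^ 2) *
      (∑ m ∈ Finset.range (n + 1), μ (Omega γ m))

lemma aux_sqrt_div (A B : ℝ) (hB : 0 ≤ B) (hAB : B ≤ A) :
    (A - B) / Real.sqrt A ≤ 2 * (Real.sqrt A - Real.sqrt B) := by
  have hA : 0 ≤ A := hB.trans hAB
  rcases hA.eq_or_lt with h | h
  · have : B = 0 := by linarith
    subst this; subst h; simp
  · have hs := Real.sqrt_pos.2 h
    rw [div_le_iff₀ hs]
    have h1 := Real.sq_sqrt hA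
    have h2 := Real.sq_sqrt hB
    nlinarith [sq_nonneg (Real.sqrt A - Real.sqrt B)]

lemma aux_tail (b u Q : ℕ → ℝ) (hb : ∀ n, 0 ≤ b n) (hu : ∀ n, 0 ≤ u n)
    (hQ : ∀ n, 0 < Q n) (hQu : ∀ n, Q n - Q (n + 1) = u n ^ 2)
    (hs : Summable fun n => b n ^ 2 * Real.sqrt (Q n)) (l : ℕ) :
    (∑' k, b (l + k) * u (l + k)) ^ 2 ≤
      2 * Real.sqrt (Q l) * ∑' k, b (l + k) ^ 2 * Real.sqrt (Q (l + k)) := by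
  have hs' : Summable fun k => b (l + k) ^ 2 * Real.sqrt (Q (l + k)) :=
    hs.comp_injective (add_right_injective l)
  have hn : ∀ k, 0 ≤ b (l + k) ^ 2 * Real.sqrt (Q (l + k)) := fun k => by positivity
  have hS : 0 ≤ ∑' k, b (l + k) ^ 2 * Real.sqrt (Q (l + k)) := tsum_nonneg hn
  have hR : 0 ≤ 2 * Real.sqrt (Q l) * ∑' k, b (l + k) ^ 2 * Real.sqrt (Q (l + k)) := by
    positivity
  have hr : ∀ k, 0 ≤ b (l + k) * u (l + k) := fun k => mul_nonneg (hb _) (hu _)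
  rw [← Real.le_sqrt (tsum_nonneg hr) hR]
  refine Real.tsum_le_of_sum_range_le hr fun K => ?_
  rw [Real.le_sqrt (Finset.sum_nonneg fun k _ => hr k) hR]
  have h1 : (∑ k ∈ Finset.range K, b (l + k) * u (l + k)) ^ 2 ≤
      (∑ k ∈ Finset.range K, u (l + k) ^ 2 / Real.sqrt (Q (l + k))) *
        ∑ k ∈ Finset.range K, b (l + k) ^ 2 * Real.sqrt (Q (l + k)) := by
    refine Finset.sum_sq_le_sum_mul_sum_of_sq_eq_mul _ (fun k _ => by positivity)
      (fun k _ => hn k) fun k _ => ?_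
    have := Real.sqrt_pos.2 (hQ (l + k))
    field_simp
  have h2 : ∑ k ∈ Finset.range K, u (l + k) ^ 2 / Real.sqrt (Q (l + k)) ≤
      2 * (Real.sqrt (Q l) - Real.sqrt (Q (l + K))) := by
    induction K with
    | zero => simp
    | succ K ih =>
      rw [Finset.sum_range_succ]
      have h3 := aux_sqrt_div (Q (l + K)) (Q (l + K + 1)) (hQ _).le
        (by nlinarith [hQu (l + K), sq_nonneg (u (l + K))])
      rw [hQu] at h3
      have ih' := ih (by
        refine Finset.sum_sq_le_sum_mul_sum_of_sq_eq_mul _ (fun k _ => by positivity)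
          (fun k _ => hn k) fun k _ => ?_
        have := Real.sqrt_pos.2 (hQ (l + k))
        field_simp)
      rw [← add_assoc]
      linarith
  have h4 : ∑ k ∈ Finset.range K, b (l + k) ^ 2 * Real.sqrt (Q (l + k)) ≤
      ∑' k, b (l + k) ^ 2 * Real.sqrt (Q (l + k)) := hs'.sum_le_tsum _ fun k _ => hn k
  refine h1.trans (mul_le_mul ?_ h4 (Finset.sum_nonneg fun k _ => hn k) (by positivity))
  linarith [Real.sqrt_nonneg (Q (l + K))]

lemma aux_W (w Q : ℕ → ℝ) (hw : ∀ n, 0 ≤ w n) (hQ : ∀ n, 0 < Q n) (C : ℝ) (hC0 : 0 ≤ C)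
    (hC : ∀ n, (∑ j ∈ Finset.range n, w j) * Q n ≤ C) (m : ℕ) :
    (∑ l ∈ Finset.range m, w l * Real.sqrt (Q (l + 1))) * Real.sqrt (Q m) ≤ 2 * C := by
  set W : ℕ → ℝ := fun n => ∑ j ∈ Finset.range n, w j with hW
  have hW0 : ∀ n, 0 ≤ W n := fun n => Finset.sum_nonneg fun j _ => hw j
  have hWs : ∀ n, W (n + 1) = W n + w n := fun n => Finset.sum_range_succ _ _
  have hC' : ∀ n, Real.sqrt (W n) * Real.sqrt (Q n) ≤ Real.sqrt C := fun n => by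
    rw [← Real.sqrt_mul (hW0 n)]
    exact Real.sqrt_le_sqrt (hC n)
  have key : ∑ l ∈ Finset.range m, w l * Real.sqrt (Q (l + 1)) ≤
      2 * Real.sqrt C * Real.sqrt (W m) := by
    induction m with
    | zero => simp [hW]
    | succ m ih =>
      rw [Finset.sum_range_succ]
      have h1 := aux_sqrt_div (W (m + 1)) (W m) (hW0 _) (by linarith [hWs m, hw m])
      have h2 : w m * Real.sqrt (Q (m + 1)) ≤
          Real.sqrt C * ((W (m + 1) - W m) / Real.sqrt (W (m + 1))) := by
        rcases (hW0 (m + 1)).eq_or_lt with h | h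
        · have : w m = 0 := by linarith [hWs m, hw m, hW0 m]
          simp [this, ← h]
        · have hs := Real.sqrt_pos.2 h
          rw [← mul_div_assoc, le_div_iff₀ hs, hWs m]
          have := mul_le_mul_of_nonneg_left (hC' (m + 1)) (hw m)
          rw [hWs m] at this
          nlinarith
      have h3 := mul_le_mul_of_nonneg_left h1 (Real.sqrt_nonneg C)
      nlinarith
  calc _ ≤ (2 * Real.sqrt C * Real.sqrt (W m)) * Real.sqrt (Q m) :=
        mul_le_mul_of_nonneg_right key (Real.sqrt_nonneg _)
    _ = 2 * Real.sqrt C * (Real.sqrt (W m) * Real.sqrt (Q m)) := by ring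
    _ ≤ 2 * Real.sqrt C * Real.sqrt C := mul_le_mul_of_nonneg_left (hC' m) (by positivity)
    _ = 2 * C := by rw [mul_assoc, Real.mul_self_sqrt hC0]

lemma aux_Q_anti (u Q : ℕ → ℝ) (hQu : ∀ n, Q n - Q (n + 1) = u n ^ 2) : Antitone Q :=
  antitone_nat_of_succ_le fun n => by nlinarith [hQu n, sq_nonneg (u n)]

lemma aux_summ (b u Q : ℕ → ℝ) (hQu : ∀ n, Q n - Q (n + 1) = u n ^ 2)
    (hs : Summable fun n => b n ^ 2) : Summable fun n => b n ^ 2 * Real.sqrt (Q n) := by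
  refine Summable.of_nonneg_of_le (fun n => by positivity) (fun n => ?_)
    (hs.mul_right (Real.sqrt (Q 0)))
  exact mul_le_mul_of_nonneg_left
    (Real.sqrt_le_sqrt (aux_Q_anti u Q hQu (Nat.zero_le n))) (sq_nonneg _)

lemma aux_shift (B : ℕ → ℝ≥0∞) (l : ℕ) :
    ∑' k, B (l + 1 + k) = ∑' m, if l < m then B m else 0 := by
  rw [← ENNReal.summable.sum_add_tsum_nat_add' (k := l + 1)
    (f := fun m => if l < m then B m else 0)]
  rw [Finset.sum_eq_zero, zero_add]
  · refine tsum_congr fun k => ?_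
    rw [if_pos (by omega), add_comm]
  · intro i hi
    rw [if_neg]
    have := Finset.mem_range.1 hi
    omega

lemma aux_hardy (w b u Q : ℕ → ℝ) (hw : ∀ n, 0 ≤ w n) (hb : ∀ n, 0 ≤ b n) (hu : ∀ n, 0 ≤ u n)
    (hQ : ∀ n, 0 < Q n) (hQu : ∀ n, Q n - Q (n + 1) = u n ^ 2)
    (hs : Summable fun n => b n ^ 2) (C : ℝ) (hC0 : 0 ≤ C)
    (hC : ∀ n, (∑ j ∈ Finset.range n, w j) * Q n ≤ C) :
    ∑' l, ENNReal.ofReal (w l) * ENNReal.ofReal ((∑' k, b (l + 1 + k) * u (l + 1 + k)) ^ 2) ≤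
      ENNReal.ofReal (4 * C * ∑' n, b n ^ 2) := by
  have hs' := aux_summ b u Q hQu hs
  set B : ℕ → ℝ := fun n => b n ^ 2 * Real.sqrt (Q n) with hB
  have hB0 : ∀ n, 0 ≤ B n := fun n => by positivity
  set x : ℕ → ℝ := fun l => w l * (2 * Real.sqrt (Q (l + 1))) with hx
  have hx0 : ∀ l, 0 ≤ x l := fun l => mul_nonneg (hw l) (by positivity)
  calc _ ≤ ∑' l, ENNReal.ofReal (x l) * ∑' m, (if l < m then ENNReal.ofReal (B m) else 0) := by
        refine ENNReal.tsum_le_tsum fun l => ?_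
        rw [← aux_shift (fun m => ENNReal.ofReal (B m)), ← ENNReal.ofReal_tsum_of_nonneg
          (fun k => hB0 _) (hs'.comp_injective (add_right_injective (l + 1))),
          ← ENNReal.ofReal_mul (hw l), ← ENNReal.ofReal_mul (hx0 l)]
        refine ENNReal.ofReal_le_ofReal ?_
        rw [hx, mul_assoc]
        exact mul_le_mul_of_nonneg_left (aux_tail b u Q hb hu hQ hQu hs' (l + 1)) (hw l)
    _ = ∑' m, ∑' l, (if l < m then ENNReal.ofReal (x l) * ENNReal.ofReal (B m) else 0) := by
        rw [ENNReal.tsum_comm]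
        refine tsum_congr fun l => ?_
        rw [← ENNReal.tsum_mul_left]
        refine tsum_congr fun m => ?_
        split_ifs <;> simp
    _ = ∑' m, ENNReal.ofReal ((∑ l ∈ Finset.range m, x l) * B m) := by
        refine tsum_congr fun m => ?_
        rw [tsum_eq_sum (s := Finset.range m) (fun l hl => if_neg (by simpa using hl)),
          ENNReal.ofReal_mul (Finset.sum_nonneg fun l _ => hx0 l),
          ENNReal.ofReal_sum_of_nonneg (fun l _ => hx0 l), Finset.sum_mul]
        exact Finset.sum_congr rfl fun l hl => if_pos (Finset.mem_range.1 hl)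
    _ ≤ ∑' m, ENNReal.ofReal (4 * C * b m ^ 2) := by
        refine ENNReal.tsum_le_tsum fun m => ENNReal.ofReal_le_ofReal ?_
        have h := aux_W w Q hw hQ C hC0 hC m
        have e : ∑ l ∈ Finset.range m, x l =
            2 * ∑ l ∈ Finset.range m, w l * Real.sqrt (Q (l + 1)) := by
          rw [Finset.mul_sum]
          exact Finset.sum_congr rfl fun l _ => by simp only [hx]; ring
        rw [e]
        have := mul_le_mul_of_nonneg_left h (sq_nonneg (b m))
        simp only [hB]
        nlinarith
    _ = _ := by
        rw [← tsum_mul_left, ENNReal.ofReal_tsum_of_nonneg (fun m => by positivity)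
          (hs.mul_left _)]

lemma aux_tail2 (b u Q : ℕ → ℝ) (hb : ∀ n, 0 ≤ b n) (hu : ∀ n, 0 ≤ u n)
    (hQ : ∀ n, 0 < Q n) (hQu : ∀ n, Q n - Q (n + 1) = u n ^ 2)
    (hs : Summable fun n => b n ^ 2) (M : ℝ) (hM : ∑' n, b n ^ 2 ≤ M) (l : ℕ) :
    (∑' k, b (l + k) * u (l + k)) ^ 2 ≤ 2 * Q l * M := by
  refine (aux_tail b u Q hb hu hQ hQu (aux_summ b u Q hQu hs) l).trans ?_
  have hi := add_right_injective l
  have h1 : ∑' k, b (l + k) ^ 2 * Real.sqrt (Q (l + k)) ≤ ∑' k, b (l + k) ^ 2 * Real.sqrt (Q l) := by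
    refine Summable.tsum_le_tsum (fun k => ?_) ((aux_summ b u Q hQu hs).comp_injective hi)
      ((hs.comp_injective hi).mul_right _)
    exact mul_le_mul_of_nonneg_left
      (Real.sqrt_le_sqrt (aux_Q_anti u Q hQu (Nat.le_add_right l k))) (sq_nonneg _)
  rw [tsum_mul_right] at h1
  have h2 : ∑' k, b (l + k) ^ 2 ≤ M :=
    (tsum_comp_le_tsum_of_inj hs (fun n => sq_nonneg (b n)) hi).trans hM
  have h3 := Real.sq_sqrt (hQ l).le
  have h4 := Real.sqrt_nonneg (Q l)
  calc _ ≤ 2 * Real.sqrt (Q l) * (M * Real.sqrt (Q l)) := by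
        refine mul_le_mul_of_nonneg_left (h1.trans ?_) (by positivity)
        exact mul_le_mul_of_nonneg_right h2 h4
    _ = 2 * Real.sqrt (Q l) ^ 2 * M := by ring
    _ = _ := by rw [h3]

lemma aux_pt (b : ℕ → ℕ → ℝ) (u Q : ℕ → ℝ) (hb : ∀ j n, 0 ≤ b j n) (hu : ∀ n, 0 ≤ u n)
    (hQ : ∀ n, 0 < Q n) (hQu : ∀ n, Q n - Q (n + 1) = u n ^ 2) (hQ0 : Tendsto Q atTop (𝓝 0))
    (hsu : Summable fun n => u n ^ 2)
    (hs : ∀ j, Summable fun n => b j n ^ 2) (M : ℝ) (hM : ∀ j, ∑' n, b j n ^ 2 ≤ M)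
    (hpt : ∀ m, Tendsto (fun j => b j m) atTop (𝓝 0)) (l : ℕ) :
    Tendsto (fun j => ∑' k, b j (l + k) * u (l + k)) atTop (𝓝 0) := by
  rw [Metric.tendsto_nhds]
  intro ε hε
  have hl : Tendsto (fun K => 2 * Q (l + K) * M) atTop (𝓝 (2 * 0 * M)) := by
    refine Tendsto.mul_const _ (Tendsto.const_mul _ ?_)
    exact hQ0.comp (tendsto_atTop_mono (fun K => Nat.le_add_left K l) tendsto_id)
  have hlt : 2 * 0 * M < (ε / 2) ^ 2 := by
    have : 0 < (ε / 2) ^ 2 := by positivity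
    simpa using this
  obtain ⟨K, hK⟩ := (hl.eventually (gt_mem_nhds hlt)).exists
  have hfin : Tendsto (fun j => ∑ k ∈ Finset.range K, b j (l + k) * u (l + k)) atTop (𝓝 0) := by
    have := tendsto_finsetSum (Finset.range K)
      (fun k _ => (hpt (l + k)).mul_const (u (l + k)))
    simpa using this
  filter_upwards [hfin.eventually (gt_mem_nhds (half_pos hε))] with j hj
  have hr : ∀ n, 0 ≤ b j n * u n := fun n => mul_nonneg (hb j n) (hu n)
  have hsr : Summable fun n => b j n * u n := by
    refine Summable.of_nonneg_of_le hr (fun n => ?_) ((hs j).add hsu)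
    nlinarith [sq_nonneg (b j n - u n), sq_nonneg (b j n + u n)]
  have hsl : Summable fun k => b j (l + k) * u (l + k) :=
    hsr.comp_injective (add_right_injective l)
  have hsplit := hsl.sum_add_tsum_nat_add K
  have ht := aux_tail2 (b j) u Q (hb j) hu hQ hQu (hs j) M (hM j) (l + K)
  have e : ∑' k, b j (l + (k + K)) * u (l + (k + K)) =
      ∑' k, b j (l + K + k) * u (l + K + k) :=
    tsum_congr fun k => by rw [show l + (k + K) = l + K + k by ring]
  have h5 : ∑' k, b j (l + K + k) * u (l + K + k) < ε / 2 :=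
    lt_of_pow_lt_pow_left₀ 2 (half_pos hε).le (ht.trans_lt hK)
  rw [Real.dist_eq, sub_zero, abs_of_nonneg (tsum_nonneg fun k => hr (l + k)), ← hsplit, e]
  linarith


/-- If `P_n·(∑_{m=1}^n μ(Ω_m)) → 0`, where `P_n = ∑_{m=n+1}^∞ v_m/|γ_m|²`, then for every
norm-bounded sequence `(a^{(n)})` in `ℓ²_v` whose entries tend to zero coordinatewise,
`∑_l μ(Ω_l)(∑_{m=l+1}^∞ |a^{(n)}_m| v_m/|γ_m|)² → 0`. -/
theorem tail_term_tendsto_zero (γ : ℕ → ℂ) (v : ℕ → ℝ)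
    (hγ_inj : Function.Injective γ) (hγ_ne : ∀ n, γ n ≠ 0)
    (hγ_mono : Monotone fun n => ‖γ n‖) (hγ_sparse : Sparse γ)
    (hv : ∀ n, 0 < v n) (hadm : Admissible γ v)
    (μ : Measure ℂ) (hμΓ : μ (Set.range γ) = 0)
    (hP : Tendsto (fun n => ENNReal.ofReal (∑' k, v (n + 1 + k) / ‖γ (n + 1 + k)‖ ^ 2) *
        ∑ m ∈ Finset.range (n + 1), μ (Omega γ m)) atTop (𝓝 0))
    (a : ℕ → ℕ → ℂ) (ha : ∀ n, MemL2v v (a n))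
    (hbdd : ∃ M : ℝ, ∀ n, normSqV v (a n) ≤ M)
    (hpt : ∀ m, Tendsto (fun n => a n m) atTop (𝓝 0)) :
    Tendsto (fun n => ∑' l, μ (Omega γ l) *
        ENNReal.ofReal ((∑' k, ‖a n (l + 1 + k)‖ * v (l + 1 + k) / ‖γ (l + 1 + k)‖) ^ 2))
      atTop (𝓝 0) := by
  obtain ⟨M, hM⟩ := hbdd
  have hγp : ∀ n, 0 < ‖γ n‖ := fun n => norm_pos_iff.2 (hγ_ne n)
  set u : ℕ → ℝ := fun n => Real.sqrt (v n) / ‖γ n‖ with hu_def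
  set b : ℕ → ℕ → ℝ := fun j n => ‖a j n‖ * Real.sqrt (v n) with hb_def
  have hu2 : ∀ n, u n ^ 2 = v n / ‖γ n‖ ^ 2 := fun n => by
    simp only [hu_def, div_pow, Real.sq_sqrt (hv n).le]
  have hb2 : ∀ j n, b j n ^ 2 = ‖a j n‖ ^ 2 * v n := fun j n => by
    simp only [hb_def, mul_pow, Real.sq_sqrt (hv n).le]
  have hbu : ∀ j n, ‖a j n‖ * v n / ‖γ n‖ = b j n * u n := fun j n => by
    simp only [hb_def, hu_def]
    rw [mul_div_assoc', mul_assoc, Real.mul_self_sqrt (hv n).le]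
  have hu : ∀ n, 0 ≤ u n := fun n => by positivity
  have hb : ∀ j n, 0 ≤ b j n := fun j n => by positivity
  have hsu : Summable fun n => u n ^ 2 := by
    refine Summable.of_nonneg_of_le (fun n => sq_nonneg _) (fun n => ?_)
      (hadm.mul_left ((1 + ‖γ 0‖ ^ 2) / ‖γ 0‖ ^ 2))
    rw [hu2, div_mul_div_comm, div_le_div_iff₀ (by have := hγp n; positivity)
      (by have := hγp 0; positivity)]
    have h0 : ‖γ 0‖ ^ 2 ≤ ‖γ n‖ ^ 2 :=
      pow_le_pow_left₀ (norm_nonneg _) (hγ_mono (Nat.zero_le n)) 2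
    nlinarith [mul_le_mul_of_nonneg_left h0 (hv n).le]
  have hs : ∀ j, Summable fun n => b j n ^ 2 := fun j => by
    simp only [hb2]; exact ha j
  have hMb : ∀ j, ∑' n, b j n ^ 2 ≤ M := fun j => by
    simp only [hb2]; exact hM j
  have hM0 : 0 ≤ M := (tsum_nonneg fun n => sq_nonneg (b 0 n)).trans (hMb 0)
  set Q : ℕ → ℝ := fun n => ∑' k, u (n + k) ^ 2 with hQ_def
  have hsun : ∀ n, Summable fun k => u (n + k) ^ 2 := fun n =>
    hsu.comp_injective (add_right_injective n)
  have hQ : ∀ n, 0 < Q n := fun n => by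
    refine (hsun n).tsum_pos (fun k => sq_nonneg _) 0 ?_
    rw [hu2]
    have := hγp (n + 0)
    have := hv (n + 0)
    positivity
  have hQu : ∀ n, Q n - Q (n + 1) = u n ^ 2 := fun n => by
    have h := (hsun n).tsum_eq_zero_add
    have e : ∑' k, u (n + (k + 1)) ^ 2 = Q (n + 1) :=
      tsum_congr fun k => by rw [show n + (k + 1) = n + 1 + k by ring]
    rw [e] at h
    simp only [add_zero] at h
    have : Q n = u n ^ 2 + Q (n + 1) := h
    linarith
  have hQ0 : Tendsto Q atTop (𝓝 0) := by
    have := tendsto_sum_nat_add (fun n => u n ^ 2)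
    refine this.congr fun n => tsum_congr fun k => by rw [add_comm]
  have hbpt : ∀ m, Tendsto (fun j => b j m) atTop (𝓝 0) := fun m => by
    have := ((hpt m).norm).mul_const (Real.sqrt (v m))
    simpa using this
  have hT := aux_pt b u Q hb hu hQ hQu hQ0 hsu hs M hMb hbpt
  have hP' : Tendsto (fun n => ENNReal.ofReal (Q (n + 1)) *
      ∑ m ∈ Finset.range (n + 1), μ (Omega γ m)) atTop (𝓝 0) := by
    refine hP.congr fun n => ?_
    simp only [hQ_def, hu2]
  have hfin : ∀ l, μ (Omega γ l) ≠ ⊤ := fun l => by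
    obtain ⟨n, hn, hln⟩ := ((hP'.eventually (gt_mem_nhds ENNReal.zero_lt_top)).and
      (eventually_ge_atTop l)).exists
    intro htop
    have : ∑ m ∈ Finset.range (n + 1), μ (Omega γ m) = ⊤ :=
      ENNReal.sum_eq_top.2 ⟨l, Finset.mem_range.2 (by omega), htop⟩
    rw [this, ENNReal.mul_top (by simpa using hQ (n + 1))] at hn
    exact lt_irrefl _ hn
  simp only [hbu]
  rw [ENNReal.tendsto_nhds_zero]
  intro ε hε
  obtain ⟨δ, hδ0, hδ⟩ := ENNReal.lt_iff_exists_nnreal_btwn.1 (ENNReal.half_pos hε.ne')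
  have hδp : (0 : ℝ) < δ := by exact_mod_cast hδ0
  set C : ℝ := δ / (4 * (M + 1)) with hC_def
  have hCp : 0 < C := by positivity
  have hCM : 4 * C * M ≤ δ := by
    have : 4 * C * (M + 1) = δ := by rw [hC_def]; field_simp
    nlinarith
  obtain ⟨N, hN⟩ := eventually_atTop.1
    (hP'.eventually (ge_mem_nhds (ENNReal.ofReal_pos.2 hCp)))
  set w : ℕ → ℝ := fun l => if l < N then 0 else (μ (Omega γ l)).toReal with hw_def
  have hw : ∀ l, 0 ≤ w l := fun l => by
    simp only [hw_def]; split_ifs <;> simp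
  have hWC : ∀ n, (∑ j ∈ Finset.range n, w j) * Q n ≤ C := fun n => by
    rcases Nat.lt_or_ge N n with h | h
    · obtain ⟨n, rfl⟩ : ∃ p, n = p + 1 := ⟨n - 1, by omega⟩
      have h1 := hN n (by omega)
      have h2 : ∑ j ∈ Finset.range (n + 1), w j ≤
          (∑ m ∈ Finset.range (n + 1), μ (Omega γ m)).toReal := by
        rw [ENNReal.toReal_sum fun m _ => hfin m]
        refine Finset.sum_le_sum fun j _ => ?_
        simp only [hw_def]; split_ifs <;> simp
      have h3 := ENNReal.toReal_mono ENNReal.ofReal_ne_top h1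
      rw [ENNReal.toReal_mul, ENNReal.toReal_ofReal (hQ _).le, ENNReal.toReal_ofReal hCp.le] at h3
      nlinarith [mul_le_mul_of_nonneg_right h2 (hQ (n + 1)).le]
    · rw [Finset.sum_eq_zero, zero_mul]
      · exact hCp.le
      · intro j hj
        have := Finset.mem_range.1 hj
        exact if_pos (by omega)
  have hfirst : Tendsto (fun j => ∑ l ∈ Finset.range N, μ (Omega γ l) *
      ENNReal.ofReal ((∑' k, b j (l + 1 + k) * u (l + 1 + k)) ^ 2)) atTop (𝓝 0) := by
    have : Tendsto (fun j => ∑ l ∈ Finset.range N, μ (Omega γ l) *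
      ENNReal.ofReal ((∑' k, b j (l + 1 + k) * u (l + 1 + k)) ^ 2)) atTop
        (𝓝 (∑ l ∈ Finset.range N, μ (Omega γ l) * ENNReal.ofReal (0 ^ 2))) := by
      refine tendsto_finsetSum _ fun l _ => ?_
      refine ENNReal.Tendsto.const_mul ?_ (Or.inr (hfin l))
      exact ENNReal.tendsto_ofReal ((hT (l + 1)).pow 2)
    simpa using this
  filter_upwards [hfirst.eventually (ge_mem_nhds (ENNReal.half_pos hε.ne'))] with j hj
  rw [← ENNReal.summable.sum_add_tsum_nat_add' (k := N), ← ENNReal.add_halves ε]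
  refine add_le_add hj ?_
  have hH := aux_hardy w (b j) u Q hw (hb j) hu hQ hQu (hs j) C hCp.le hWC
  calc _ = ∑' i, (fun l => ENNReal.ofReal (w l) *
        ENNReal.ofReal ((∑' k, b j (l + 1 + k) * u (l + 1 + k)) ^ 2)) (i + N) := by
        refine tsum_congr fun i => ?_
        have : w (i + N) = (μ (Omega γ (i + N))).toReal := if_neg (by omega)
        simp only [this, ENNReal.ofReal_toReal (hfin _)]
    _ ≤ _ := ENNReal.tsum_comp_le_tsum_of_injective (add_left_injective N) _
    _ ≤ _ := hH
    _ ≤ ENNReal.ofReal δ := by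
        refine ENNReal.ofReal_le_ofReal (le_trans ?_ hCM)
        exact mul_le_mul_of_nonneg_left (hMb j) (by positivity)
    _ ≤ ε / 2 := by rw [ENNReal.ofReal_coe_nnreal]; exact hδ.le
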